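/- There exist universal constants c₁, c₂ > 0 such that for any halfspace f = 1{∑ a_i x_i > t} with ∑ a_i² = 1, a_1 ≥ ... ≥ a_n ≥ 0, and E[f] ≤ 1/2, the maximal influence satisfies c₁·E[f]·min(1, a_1·√(log(1/E[f]))) ≤ max_i I_i(f) ≤ c₂·E[f]·min(1, a_1·√(log(1/E[f]))). -/

import Mathlib

open Finset

noncomputable section
open scoped Classical

/-- The ±1 value associated to a Boolean bit. -/
def sgn1 (b : Bool) : ℝ := if b then 1 else -1

/-- Probability of an event under the uniform measure on `{-1,1}^n`. -/
def cubePr (n : ℕ) (P : (Fin n → Bool) → Prop) : ℝ :=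
  ((univ.filter P).card : ℝ) / 2 ^ n

/-- Expectation of a function under the uniform measure on `{-1,1}^n`. -/
def cubeE (n : ℕ) (f : (Fin n → Bool) → ℝ) : ℝ := (∑ x, f x) / 2 ^ n

/-- The linear form `a · x = ∑ aᵢ xᵢ` on `{-1,1}^n`. -/
def lin (n : ℕ) (a : Fin n → ℝ) (x : Fin n → Bool) : ℝ := ∑ i, a i * sgn1 (x i)

/-- The halfspace `1{a · x > t}` as a 0/1-valued function. -/
def halfspace (n : ℕ) (a : Fin n → ℝ) (t : ℝ) (x : Fin n → Bool) : ℝ :=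
  if t < lin n a x then 1 else 0

/-- The influence of coordinate `i` on `f`: the probability that flipping
coordinate `i` changes the value of `f`. -/
def infl (n : ℕ) (i : Fin n) (f : (Fin n → Bool) → ℝ) : ℝ :=
  cubePr n (fun x => f x ≠ f (Function.update x i (!x i)))

/-- The degree-1 Fourier coefficient `f̂({i}) = E[f(x)·xᵢ]`. -/
def fCoeff (n : ℕ) (f : (Fin n → Bool) → ℝ) (i : Fin n) : ℝ :=
  cubeE n (fun x => f x * sgn1 (x i))

/-- The degree-1 Fourier weight `W¹(f) = ∑ᵢ f̂({i})²`. -/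
def W1 (n : ℕ) (f : (Fin n → Bool) → ℝ) : ℝ := ∑ i, (fCoeff n f i) ^ 2

/-!
Write `X = ∑ aᵢ xᵢ` and let `A` be the largest weight. For a monotone `g`, the summation by parts
`E[g(X) X] = ½ ∑ aᵢ E|g(X) - g(X with xᵢ flipped)|` compares `E[g(X) X]` with the probability that
`X` lies where `g` increases.

*Upper bound.* A flip of coordinate `i` can only matter when `X` or its flip lies in
`(t, t + 2A]`. Choosing `g` supported on `(t, ∞)`, with a jump at `t` and slope one on
`(t, t + 4A]`, yields `P(t < X ≤ t + 2A) ≤ E[g(X) X] ≤ 6A E[f X]`, and the level-one inequality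
bounds `E[f X]` by a multiple of `E[f] √(log (1 / E[f]))`.

*Lower bound.* Let `Y` be `X` without its heaviest term, so that the influence `I` of that
coordinate is exactly `P(t - A < Y ≤ t + A)`. Taking `g` to be the projection onto
`[t - A, t + A]` gives `I ≥ A R P(Y > R)` for all `R ≥ t + A`. Since `E[f] ≤ P(Y > t + A) + I`, the
case `R = t + A` yields `I ≥ ½ E[f] min(1, A (t + A))`, which suffices unless `A` is small compared
to `1 / (1 + t)`. In that regime `X` has a Gaussian lower tail up to `t`, so that
`√(log (1 / E[f]))` is at most a multiple of `t` when `t ≥ 1`, while for `t ≤ 1` one takes `R = 2`.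
-/

open scoped BigOperators

section Cube

variable {n : ℕ} {a : Fin n → ℝ} {t : ℝ}

/-! ### Expectations and probabilities on the cube -/

section Expectation

variable {f g : (Fin n → Bool) → ℝ} {P Q R : (Fin n → Bool) → Prop}
  {σ : (Fin n → Bool) → Fin n → Bool}

lemma cubeE_eq_expect (f : (Fin n → Bool) → ℝ) : cubeE n f = 𝔼 x, f x := by
  simp [cubeE, Fintype.expect_eq_sum_div_card]

lemma cubeE_mono (h : ∀ x, f x ≤ g x) : cubeE n f ≤ cubeE n g := by
  simpa only [cubeE_eq_expect] using expect_le_expect fun x _ => h x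

lemma cubeE_add (f g : (Fin n → Bool) → ℝ) :
    cubeE n (fun x => f x + g x) = cubeE n f + cubeE n g := by
  simp only [cubeE_eq_expect, expect_add_distrib]

lemma cubeE_const_mul (c : ℝ) (f : (Fin n → Bool) → ℝ) :
    cubeE n (fun x => c * f x) = c * cubeE n f := by
  simp only [cubeE_eq_expect, mul_expect]

lemma cubeE_const (c : ℝ) : cubeE n (fun _ => c) = c := by
  rw [cubeE_eq_expect, Fintype.expect_const]

lemma cubeE_sum {ι : Type*} (s : Finset ι) (f : ι → (Fin n → Bool) → ℝ) :
    cubeE n (fun x => ∑ i ∈ s, f i x) = ∑ i ∈ s, cubeE n (f i) := by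
  simp only [cubeE_eq_expect, expect_sum_comm]

lemma cubeE_comp_involutive (hσ : Function.Involutive σ) (f : (Fin n → Bool) → ℝ) :
    cubeE n (fun x => f (σ x)) = cubeE n f := by
  simp only [cubeE_eq_expect]
  exact Fintype.expect_equiv hσ.toPerm _ _ fun _ => rfl

lemma sq_cubeE_mul_le (f g : (Fin n → Bool) → ℝ) :
    cubeE n (fun x => f x * g x) ^ 2 ≤ cubeE n (fun x => f x ^ 2) * cubeE n (fun x => g x ^ 2) := by
  simpa only [cubeE_eq_expect] using expect_mul_sq_le_sq_mul_sq univ f g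

lemma cubePr_eq_cubeE (P : (Fin n → Bool) → Prop) :
    cubePr n P = cubeE n (fun x => if P x then 1 else 0) := by
  simp [cubePr, cubeE]

lemma cubePr_nonneg (P : (Fin n → Bool) → Prop) : 0 ≤ cubePr n P := by
  unfold cubePr
  positivity

lemma cubePr_mono (h : ∀ x, P x → Q x) : cubePr n P ≤ cubePr n Q := by
  simp only [cubePr_eq_cubeE]
  refine cubeE_mono fun x => ?_
  have := h x
  split_ifs <;> first | tauto | norm_num

lemma cubePr_le_one (P : (Fin n → Bool) → Prop) : cubePr n P ≤ 1 :=
  (cubePr_mono fun _ _ => trivial).trans_eq <| by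
    rw [cubePr_eq_cubeE]
    simp only [if_true, cubeE_const]

lemma cubePr_le_add (h : ∀ x, P x → Q x ∨ R x) : cubePr n P ≤ cubePr n Q + cubePr n R := by
  simp only [cubePr_eq_cubeE, ← cubeE_add]
  refine cubeE_mono fun x => ?_
  have := h x
  split_ifs <;> first | tauto | norm_num

lemma cubePr_comp_involutive (hσ : Function.Involutive σ) (P : (Fin n → Bool) → Prop) :
    cubePr n (fun x => P (σ x)) = cubePr n P := by
  simp only [cubePr_eq_cubeE]
  exact cubeE_comp_involutive hσ fun x => if P x then 1 else 0

lemma cubePr_le_two_mul (hσ : Function.Involutive σ) (h : ∀ x, P x → Q x ∨ Q (σ x)) :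
    cubePr n P ≤ 2 * cubePr n Q := by
  have := cubePr_le_add h
  rw [cubePr_comp_involutive hσ] at this
  linarith

/-- The **Paley–Zygmund inequality**. -/
lemma sq_cubeE_sub_le {θ : ℝ} (hθ : 0 ≤ θ) (hθg : θ ≤ cubeE n g) :
    (cubeE n g - θ) ^ 2 ≤ cubeE n (fun x => g x ^ 2) * cubePr n (θ < g ·) := by
  have truncate : cubeE n g ≤ θ + cubeE n fun x => g x * if θ < g x then 1 else 0 := by
    rw [← cubeE_const (n := n) θ, ← cubeE_add, cubeE_const]
    refine cubeE_mono fun x => ?_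
    split_ifs <;> linarith
  calc (cubeE n g - θ) ^ 2
      ≤ cubeE n (fun x => g x * if θ < g x then 1 else 0) ^ 2 :=
        pow_le_pow_left₀ (by linarith) (by linarith) 2
    _ ≤ cubeE n (fun x => g x ^ 2) * cubeE n (fun x => (if θ < g x then 1 else 0) ^ 2) :=
        sq_cubeE_mul_le _ _
    _ = cubeE n (fun x => g x ^ 2) * cubePr n (θ < g ·) := by
        simp only [cubePr_eq_cubeE, ite_pow, one_pow, ne_eq, OfNat.ofNat_ne_zero,
          not_false_eq_true, zero_pow]

end Expectation

/-! ### Linear forms and flips -/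

/-- The point of the cube obtained from `x` by flipping coordinate `i`; the influence `infl` of
coordinate `i` compares a function at `x` and at this point. -/
def flipCoord (i : Fin n) (x : Fin n → Bool) : Fin n → Bool := Function.update x i (!x i)

lemma flipCoord_involutive (i : Fin n) : Function.Involutive (flipCoord i) := fun x => by
  simp [flipCoord]

lemma sgn1_not (b : Bool) : sgn1 (!b) = -sgn1 b := by cases b <;> simp [sgn1]

lemma sgn1_eq_one_or_neg_one (b : Bool) : sgn1 b = 1 ∨ sgn1 b = -1 := by cases b <;> simp [sgn1]

lemma sgn1_flipCoord_self (i : Fin n) (x : Fin n → Bool) :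
    sgn1 (flipCoord i x i) = -sgn1 (x i) := by
  simp [flipCoord, sgn1_not]

lemma lin_compl (a : Fin n → ℝ) (x : Fin n → Bool) : lin n a xᶜ = -lin n a x := by
  simp [lin, sgn1_not]

lemma lin_update_zero (a : Fin n → ℝ) (i : Fin n) (x : Fin n → Bool) :
    lin n (Function.update a i 0) x = lin n a x - a i * sgn1 (x i) := by
  simp only [lin, ← add_sum_erase univ _ (mem_univ i), Function.update_self, zero_mul, zero_add,
    add_sub_cancel_left]
  exact sum_congr rfl fun j hj => by rw [Function.update_of_ne (ne_of_mem_erase hj)]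

lemma lin_flipCoord (a : Fin n → ℝ) (i : Fin n) (x : Fin n → Bool) :
    lin n a (flipCoord i x) = lin n a x - 2 * a i * sgn1 (x i) := by
  have off_coord : lin n (Function.update a i 0) (flipCoord i x) =
      lin n (Function.update a i 0) x :=
    sum_congr rfl fun j _ => by
      rcases eq_or_ne j i with rfl | hj
      · simp
      · simp [flipCoord, hj]
  rw [lin_update_zero, lin_update_zero, sgn1_flipCoord_self] at off_coord
  linarith

lemma abs_lin_sub_lin_flipCoord {i : Fin n} (hi : 0 ≤ a i) (x : Fin n → Bool) :
    |lin n a x - lin n a (flipCoord i x)| = 2 * a i := by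
  rw [lin_flipCoord]
  rcases sgn1_eq_one_or_neg_one (x i) with h | h <;> simp [h, abs_of_nonneg hi]

lemma abs_lin_sub_lin_update_zero {i : Fin n} (hi : 0 ≤ a i) (x : Fin n → Bool) :
    |lin n a x - lin n (Function.update a i 0) x| = a i := by
  rw [lin_update_zero]
  rcases sgn1_eq_one_or_neg_one (x i) with h | h <;> simp [h, abs_of_nonneg hi]

lemma cubeE_mul_sgn1 (φ : (Fin n → Bool) → ℝ) (i : Fin n) :
    cubeE n (fun x => φ x * sgn1 (x i)) =
      1 / 2 * cubeE n (fun x => sgn1 (x i) * (φ x - φ (flipCoord i x))) := by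
  have flipped := cubeE_comp_involutive (flipCoord_involutive i) fun x => φ x * sgn1 (x i)
  simp only [sgn1_flipCoord_self] at flipped
  have split : cubeE n (fun x => sgn1 (x i) * (φ x - φ (flipCoord i x))) =
      cubeE n (fun x => φ x * sgn1 (x i) + φ (flipCoord i x) * -sgn1 (x i)) := by
    congr 1
    ext x
    ring
  rw [split, cubeE_add, flipped]
  ring

lemma cubeE_mul_lin (φ : (Fin n → Bool) → ℝ) (a : Fin n → ℝ) :
    cubeE n (fun x => φ x * lin n a x) = ∑ i, a i * cubeE n (fun x => φ x * sgn1 (x i)) := by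
  simp only [← cubeE_const_mul, ← cubeE_sum, lin, mul_sum]
  simp only [mul_left_comm]

/-! ### Monotone functions of a linear form -/

section Monotone

variable {g : ℝ → ℝ} {S : Set ℝ} {A : ℝ}

lemma sgn1_mul_comp_lin_sub (hg : Monotone g) {i : Fin n} (hi : 0 ≤ a i) (x : Fin n → Bool) :
    sgn1 (x i) * (g (lin n a x) - g (lin n a (flipCoord i x))) =
      |g (lin n a x) - g (lin n a (flipCoord i x))| := by
  rw [lin_flipCoord]
  rcases sgn1_eq_one_or_neg_one (x i) with h | h
  · have := hg (show lin n a x - 2 * a i * 1 ≤ lin n a x by linarith)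
    rw [h, abs_of_nonneg (by linarith), one_mul]
  · have := hg (show lin n a x ≤ lin n a x - 2 * a i * -1 by linarith)
    rw [h, abs_of_nonpos (by linarith), neg_one_mul]

lemma cubeE_comp_lin_mul_lin (hg : Monotone g) (ha : ∀ i, 0 ≤ a i) :
    cubeE n (fun x => g (lin n a x) * lin n a x) =
      ∑ i, a i * (1 / 2 * cubeE n fun x => |g (lin n a x) - g (lin n a (flipCoord i x))|) := by
  rw [cubeE_mul_lin]
  refine sum_congr rfl fun i _ => ?_
  rw [cubeE_mul_sgn1 fun x => g (lin n a x)]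
  simp only [sgn1_mul_comp_lin_sub hg (ha i)]

lemma le_cubeE_comp_lin_mul_lin {K : ℝ} (hg : Monotone g) (ha : ∀ i, 0 ≤ a i)
    (haA : ∀ i, a i ≤ A)
    (hK : ∀ u ∈ S, ∀ v, |u - v| ≤ 2 * A → K * |u - v| ≤ |g u - g v|) :
    K * (∑ i, a i ^ 2) * cubePr n (lin n a · ∈ S) ≤
      cubeE n (fun x => g (lin n a x) * lin n a x) := by
  rw [cubeE_comp_lin_mul_lin hg ha, mul_sum, sum_mul]
  refine sum_le_sum fun i _ => ?_
  have gradient : 2 * K * a i * cubePr n (lin n a · ∈ S) ≤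
      cubeE n fun x => |g (lin n a x) - g (lin n a (flipCoord i x))| := by
    rw [cubePr_eq_cubeE, ← cubeE_const_mul]
    refine cubeE_mono fun x => ?_
    split_ifs with hx
    · have := hK _ hx (lin n a (flipCoord i x))
      rw [abs_lin_sub_lin_flipCoord (ha i)] at this
      linarith [this (by linarith [haA i])]
    · simp
  linarith [mul_le_mul_of_nonneg_left gradient (ha i)]

lemma cubeE_comp_lin_mul_lin_le {K : NNReal} (hg : Monotone g) (ha : ∀ i, 0 ≤ a i)
    (haA : ∀ i, a i ≤ A) (hK : LipschitzWith K g)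
    (hS : ∀ u ∉ S, ∀ v ∉ S, |u - v| ≤ 2 * A → g u = g v) :
    cubeE n (fun x => g (lin n a x) * lin n a x) ≤
      2 * K * (∑ i, a i ^ 2) * cubePr n (lin n a · ∈ S) := by
  rw [cubeE_comp_lin_mul_lin hg ha, mul_sum, sum_mul]
  refine sum_le_sum fun i _ => ?_
  have gradient : cubeE n (fun x => |g (lin n a x) - g (lin n a (flipCoord i x))|) ≤
      2 * K * a i * (cubePr n (lin n a · ∈ S) + cubePr n (lin n a · ∈ S)) := by
    nth_rw 2 [← cubePr_comp_involutive (flipCoord_involutive i)]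
    rw [cubePr_eq_cubeE, cubePr_eq_cubeE, ← cubeE_add, ← cubeE_const_mul]
    refine cubeE_mono fun x => ?_
    have step := abs_lin_sub_lin_flipCoord (ha i) x
    have lipschitz := hK.dist_le_mul (lin n a x) (lin n a (flipCoord i x))
    rw [Real.dist_eq, Real.dist_eq, step] at lipschitz
    have nonneg : 0 ≤ (K : ℝ) * (2 * a i) := by have := ha i; positivity
    split_ifs with hx hy hy
    · linarith
    · linarith
    · linarith
    · rw [hS _ hx _ hy (by linarith [haA i])]
      simp
  linarith [mul_le_mul_of_nonneg_left gradient (ha i)]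

lemma mul_cubePr_le_cubeE_comp_lin_mul_lin {c R : ℝ} (hg : Monotone g) (hR : 0 ≤ R)
    (hcR : ∀ u, R < u → c ≤ g u - g (-u)) :
    c * R * cubePr n (R < lin n a ·) ≤ cubeE n (fun x => g (lin n a x) * lin n a x) := by
  have even_part : cubeE n (fun x => c * R * ((if R < lin n a x then 1 else 0) +
        if R < lin n a xᶜ then 1 else 0)) ≤
      cubeE n fun x => g (lin n a x) * lin n a x + g (lin n a xᶜ) * lin n a xᶜ := by
    refine cubeE_mono fun x => ?_
    rw [lin_compl]
    generalize lin n a x = u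
    split_ifs with hpos hneg hneg
    · linarith
    · nlinarith [hcR u hpos, hg (show -u ≤ u by linarith)]
    · have := hcR (-u) hneg
      rw [neg_neg] at this
      nlinarith [hg (show u ≤ -u by linarith)]
    · rcases le_total 0 u with hu | hu
      · nlinarith [hg (show -u ≤ u by linarith)]
      · nlinarith [hg (show u ≤ -u by linarith)]
  rw [cubeE_const_mul, cubeE_add, cubeE_add,
    cubeE_comp_involutive compl_involutive fun x => if R < lin n a x then (1 : ℝ) else 0,
    cubeE_comp_involutive compl_involutive fun x => g (lin n a x) * lin n a x] at even_part
  rw [cubePr_eq_cubeE]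
  linarith

end Monotone

/-! ### Exponential moments -/

lemma cubeE_exp_mul_lin (c : ℝ) (a : Fin n → ℝ) :
    cubeE n (fun x => Real.exp (c * lin n a x)) = ∏ i, Real.cosh (c * a i) := by
  have two_mul_cosh (i : Fin n) :
      2 * Real.cosh (c * a i) = ∑ b, Real.exp (c * (a i * sgn1 b)) := by
    simp [sgn1, Real.cosh_eq, mul_div_cancel₀]
  have expand :
      ∏ i, (2 * Real.cosh (c * a i)) = ∑ x : Fin n → Bool, Real.exp (c * lin n a x) := by
    simp only [two_mul_cosh, prod_univ_sum, Fintype.piFinset_univ, lin, mul_sum, Real.exp_sum]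
  simp [cubeE, ← expand, prod_mul_distrib]

lemma cubeE_exp_mul_lin_le (c : ℝ) (a : Fin n → ℝ) :
    cubeE n (fun x => Real.exp (c * lin n a x)) ≤ Real.exp (c ^ 2 * (∑ i, a i ^ 2) / 2) := by
  simp only [cubeE_exp_mul_lin, mul_sum, sum_div, Real.exp_sum, ← mul_pow]
  exact prod_le_prod (fun i _ => (Real.cosh_pos _).le) fun i _ => Real.cosh_le_exp_half_sq _

lemma one_add_half_sq_le_cosh (u : ℝ) : 1 + u ^ 2 / 2 ≤ Real.cosh u := by
  have double : Real.cosh u = 1 + 2 * Real.sinh (u / 2) ^ 2 := by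
    have := Real.cosh_two_mul (u / 2)
    rw [mul_div_cancel₀ _ two_ne_zero, Real.cosh_sq] at this
    linarith
  have sinh_ge : (u / 2) ^ 2 ≤ Real.sinh (u / 2) ^ 2 := by
    rw [sq_le_sq, Real.abs_sinh]
    exact Real.self_le_sinh_iff.mpr (abs_nonneg _)
  linarith

lemma exp_quarter_sq_le_cosh {u : ℝ} (hu : |u| ≤ 1) : Real.exp (u ^ 2 / 4) ≤ Real.cosh u := by
  have hu2 : u ^ 2 ≤ 1 := (sq_le_one_iff_abs_le_one u).mpr hu
  have := sq_nonneg u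
  calc Real.exp (u ^ 2 / 4)
      ≤ 1 / (1 - u ^ 2 / 4) :=
        Real.exp_bound_div_one_sub_of_interval (by positivity) (by linarith)
    _ ≤ 1 + u ^ 2 / 2 := by
        rw [div_le_iff₀ (by linarith)]
        nlinarith
    _ ≤ Real.cosh u := one_add_half_sq_le_cosh u

lemma exp_le_cubeE_exp_mul_lin {c : ℝ} (hca : ∀ i, |c * a i| ≤ 1) :
    Real.exp (c ^ 2 * (∑ i, a i ^ 2) / 4) ≤ cubeE n (fun x => Real.exp (c * lin n a x)) := by
  simp only [cubeE_exp_mul_lin, mul_sum, sum_div, Real.exp_sum, ← mul_pow]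
  exact prod_le_prod (fun i _ => (Real.exp_pos _).le) fun i _ => exp_quarter_sq_le_cosh (hca i)

/-- The **level-one inequality**. -/
lemma cubeE_mul_lin_le {f : (Fin n → Bool) → ℝ} (hf0 : ∀ x, 0 ≤ f x) (hf1 : ∀ x, f x ≤ 1)
    (ha : ∑ i, a i ^ 2 ≤ 1) (hpos : 0 < cubeE n f) (hlt : cubeE n f < 1) :
    cubeE n (fun x => f x * lin n a x) ≤
      3 / 2 * cubeE n f * √(Real.log (1 / cubeE n f)) := by
  set p := cubeE n f with hp
  set L := √(Real.log (1 / p)) with hL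
  have log_pos : 0 < Real.log (1 / p) := Real.log_pos (by rwa [lt_div_iff₀ hpos, one_mul])
  have L_pos : 0 < L := Real.sqrt_pos.mpr log_pos
  have exp_neg_sq : Real.exp (-L ^ 2) = p := by
    rw [hL, Real.sq_sqrt log_pos.le, one_div, Real.log_inv, neg_neg, Real.exp_log hpos]
  have pointwise : cubeE n (fun x => L * (f x * lin n a x) + (1 - 3 / 2 * L ^ 2) * f x) ≤
      cubeE n (fun x => Real.exp (-(3 / 2 * L ^ 2)) * Real.exp (L * lin n a x)) := by
    refine cubeE_mono fun x => ?_
    rw [← Real.exp_add]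
    set y := -(3 / 2 * L ^ 2) + L * lin n a x with hy
    calc L * (f x * lin n a x) + (1 - 3 / 2 * L ^ 2) * f x
        = f x * (y + 1) := by rw [hy]; ring
      _ ≤ f x * Real.exp y := mul_le_mul_of_nonneg_left (Real.add_one_le_exp y) (hf0 x)
      _ ≤ Real.exp y := mul_le_of_le_one_left (Real.exp_pos y).le (hf1 x)
  have moment : Real.exp (-(3 / 2 * L ^ 2)) * cubeE n (fun x => Real.exp (L * lin n a x)) ≤ p :=
    calc _ ≤ Real.exp (-(3 / 2 * L ^ 2)) * Real.exp (L ^ 2 / 2) := by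
          gcongr
          refine (cubeE_exp_mul_lin_le _ _).trans ?_
          gcongr
          exact mul_le_of_le_one_right (sq_nonneg L) ha
      _ = p := by
          rw [← Real.exp_add, ← exp_neg_sq]
          ring_nf
  rw [cubeE_add, cubeE_const_mul, cubeE_const_mul, cubeE_const_mul, ← hp] at pointwise
  refine le_of_mul_le_mul_left ?_ L_pos
  linarith

lemma exp_le_cubePr_lt_lin (ht : 0 ≤ t) (ha : ∑ i, a i ^ 2 = 1)
    (hat : ∀ i, |(4 * t + 2) * a i| ≤ 1) :
    1 / 4 * Real.exp (-(6 * (2 * t + 1) ^ 2)) ≤ cubePr n (t < lin n a ·) := by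
  -- This choice of `l` makes `exp (l t)` at most half of `E[exp (l X)]`.
  set l := 4 * t + 2 with hl
  have moment_ge : Real.exp (l ^ 2 / 4) ≤ cubeE n (fun x => Real.exp (l * lin n a x)) := by
    simpa only [ha, mul_one] using exp_le_cubeE_exp_mul_lin hat
  have sq_moment_le : cubeE n (fun x => Real.exp (l * lin n a x) ^ 2) ≤
      Real.exp (2 * l ^ 2) := by
    convert cubeE_exp_mul_lin_le (2 * l) a using 3 with x
    · rw [← Real.exp_nat_mul, Nat.cast_ofNat, mul_assoc]
    · rw [ha]
      ring
  have threshold_le : 2 * Real.exp (l * t) ≤ Real.exp (l ^ 2 / 4) := by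
    calc 2 * Real.exp (l * t)
        ≤ Real.exp 1 * Real.exp (l * t) := by gcongr; exact Real.exp_one_gt_two.le
      _ = Real.exp (1 + l * t) := (Real.exp_add _ _).symm
      _ ≤ Real.exp (l ^ 2 / 4) := by
          gcongr
          rw [hl]
          nlinarith
  have event : cubePr n (fun x => Real.exp (l * t) < Real.exp (l * lin n a x)) =
      cubePr n (t < lin n a ·) := by
    simp only [Real.exp_lt_exp, mul_lt_mul_iff_right₀ (show 0 < l by linarith)]
  have threshold_pos := Real.exp_pos (l * t)
  have paley_zygmund := sq_cubeE_sub_le (n := n) (g := fun x => Real.exp (l * lin n a x))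
    threshold_pos.le (by linarith)
  rw [event] at paley_zygmund
  refine le_of_mul_le_mul_left ?_ (Real.exp_pos (2 * l ^ 2))
  calc Real.exp (2 * l ^ 2) * (1 / 4 * Real.exp (-(6 * (2 * t + 1) ^ 2)))
      = (1 / 2 * Real.exp (l ^ 2 / 4)) ^ 2 := by
        rw [mul_pow, ← Real.exp_nat_mul, mul_left_comm, ← Real.exp_add, hl]
        norm_num
        ring
    _ ≤ (cubeE n (fun x => Real.exp (l * lin n a x)) - Real.exp (l * t)) ^ 2 :=
        pow_le_pow_left₀ (by positivity) (by linarith) 2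
    _ ≤ Real.exp (2 * l ^ 2) * cubePr n (t < lin n a ·) :=
        paley_zygmund.trans (mul_le_mul_of_nonneg_right sq_moment_le (cubePr_nonneg _))

/-! ### Halfspaces -/

lemma cubeE_halfspace (a : Fin n → ℝ) (t : ℝ) :
    cubeE n (halfspace n a t) = cubePr n (t < lin n a ·) := by
  rw [cubePr_eq_cubeE]
  congr 1

lemma halfspace_nonneg (a : Fin n → ℝ) (t : ℝ) (x : Fin n → Bool) : 0 ≤ halfspace n a t x := by
  unfold halfspace
  split_ifs <;> norm_num

lemma halfspace_le_one (a : Fin n → ℝ) (t : ℝ) (x : Fin n → Bool) : halfspace n a t x ≤ 1 := by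
  unfold halfspace
  split_ifs <;> norm_num

lemma halfspace_ne_iff (a : Fin n → ℝ) (t : ℝ) (x y : Fin n → Bool) :
    halfspace n a t x ≠ halfspace n a t y ↔ ¬(t < lin n a x ↔ t < lin n a y) := by
  unfold halfspace
  split_ifs <;> simp [*]

lemma two_mul_cubeE_halfspace (a : Fin n → ℝ) (t : ℝ) :
    2 * cubeE n (halfspace n a t) =
      cubeE n (fun x => halfspace n a t x + halfspace n a t xᶜ) := by
  rw [cubeE_add, cubeE_comp_involutive compl_involutive, two_mul]

lemma cubeE_halfspace_le_half (ht : 0 ≤ t) : cubeE n (halfspace n a t) ≤ 1 / 2 := by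
  have : 2 * cubeE n (halfspace n a t) ≤ cubeE n (fun _ => 1) := by
    rw [two_mul_cubeE_halfspace]
    refine cubeE_mono fun x => ?_
    simp only [halfspace, lin_compl]
    split_ifs <;> linarith
  rw [cubeE_const] at this
  linarith

lemma half_lt_cubeE_halfspace {x : Fin n → Bool} (hx : |lin n a x| < -t) :
    1 / 2 < cubeE n (halfspace n a t) := by
  obtain ⟨hx1, hx2⟩ := abs_lt.mp hx
  have : cubeE n (fun _ => 1) < 2 * cubeE n (halfspace n a t) := by
    rw [two_mul_cubeE_halfspace, cubeE_eq_expect, cubeE_eq_expect]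
    refine expect_lt_expect (fun y _ => ?_) ⟨x, mem_univ x, ?_⟩ <;> simp only [halfspace, lin_compl]
    · split_ifs <;> linarith
    · rw [if_pos (by linarith), if_pos (by linarith)]
      norm_num
  rw [cubeE_const] at this
  linarith

lemma exists_nonneg_halfspace_eq (h : cubeE n (halfspace n a t) ≤ 1 / 2) :
    ∃ s, 0 ≤ s ∧ halfspace n a t = halfspace n a s := by
  rcases le_or_gt 0 t with ht | ht
  · exact ⟨t, ht, rfl⟩
  refine ⟨0, le_rfl, funext fun x => by_contra fun hne => h.not_gt ?_⟩
  refine half_lt_cubeE_halfspace (x := x) (abs_lt.mpr ?_)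
  unfold halfspace at hne
  split_ifs at hne <;> first | exact absurd rfl hne | constructor <;> linarith

lemma infl_halfspace_eq {i : Fin n} (hi : 0 ≤ a i) :
    infl n i (halfspace n a t) =
      cubePr n (lin n (Function.update a i 0) · ∈ Set.Ioc (t - a i) (t + a i)) := by
  change cubePr n (fun x => halfspace n a t x ≠ halfspace n a t (flipCoord i x)) = _
  congr 1
  ext x
  rw [halfspace_ne_iff, lin_flipCoord, lin_update_zero, Set.mem_Ioc]
  rcases sgn1_eq_one_or_neg_one (x i) with h | h <;> rw [h] <;> grind

/-! ### The upper bound -/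

lemma infl_halfspace_le_two_mul (i : Fin n) :
    infl n i (halfspace n a t) ≤ 2 * cubePr n (t < lin n a ·) :=
  cubePr_le_two_mul (flipCoord_involutive i) fun x hx => by
    have := (halfspace_ne_iff a t x (flipCoord i x)).mp hx
    tauto

lemma infl_halfspace_le_two_mul_Ioc {A : ℝ} {i : Fin n} (hi : 0 ≤ a i) (hiA : a i ≤ A) :
    infl n i (halfspace n a t) ≤ 2 * cubePr n (lin n a · ∈ Set.Ioc t (t + 2 * A)) :=
  cubePr_le_two_mul (flipCoord_involutive i) fun x hx => by
    have crosses := (halfspace_ne_iff a t x (flipCoord i x)).mp hx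
    have step := abs_le.mp (abs_lin_sub_lin_flipCoord hi x).le
    simp only [Set.mem_Ioc]
    grind

/-- A monotone test function that vanishes up to `t`, jumps by `2 * A` there, has slope one on
`(t, t + 4 * A]` and is constant afterwards: every move of length at most `2 * A` starting in
`(t, t + 2 * A]` changes it by at least the length of the move. -/
def jumpRamp (t A u : ℝ) : ℝ := if t < u then 2 * A + min (u - t) (4 * A) else 0

section JumpRamp

variable {A : ℝ}

lemma monotone_jumpRamp (hA : 0 ≤ A) : Monotone (jumpRamp t A) := fun u v huv => by
  unfold jumpRamp
  split_ifs
  · gcongr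
  · linarith
  · have := le_min (show 0 ≤ v - t by linarith) (show 0 ≤ 4 * A by linarith)
    linarith
  · rfl

lemma jumpRamp_le (hA : 0 ≤ A) (u : ℝ) : jumpRamp t A u ≤ 6 * A := by
  unfold jumpRamp
  split_ifs
  · linarith [min_le_right (u - t) (4 * A)]
  · linarith

lemma abs_sub_le_abs_jumpRamp_sub {u v : ℝ} (hu : u ∈ Set.Ioc t (t + 2 * A))
    (huv : |u - v| ≤ 2 * A) : |u - v| ≤ |jumpRamp t A u - jumpRamp t A v| := by
  obtain ⟨hu1, hu2⟩ := hu
  have hv := abs_le.mp huv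
  unfold jumpRamp
  rw [if_pos hu1, min_eq_left (by linarith)]
  split_ifs
  · rw [min_eq_left (by linarith)]
    ring_nf
    rfl
  · exact huv.trans (le_abs.mpr (Or.inl (by linarith)))

end JumpRamp

lemma cubePr_lin_mem_Ioc_le {A : ℝ} (ht : 0 ≤ t) (hA : 0 ≤ A) (ha0 : ∀ i, 0 ≤ a i)
    (haA : ∀ i, a i ≤ A) (ha : ∑ i, a i ^ 2 = 1) (hp : 0 < cubePr n (t < lin n a ·)) :
    cubePr n (lin n a · ∈ Set.Ioc t (t + 2 * A)) ≤
      9 * cubePr n (t < lin n a ·) * (A * √(Real.log (1 / cubePr n (t < lin n a ·)))) := by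
  have correlation_ge : cubePr n (lin n a · ∈ Set.Ioc t (t + 2 * A)) ≤
      cubeE n (fun x => jumpRamp t A (lin n a x) * lin n a x) := by
    have := le_cubeE_comp_lin_mul_lin (K := 1) (S := Set.Ioc t (t + 2 * A)) (monotone_jumpRamp hA)
      ha0 haA fun u hu v huv => by
        rw [one_mul]
        exact abs_sub_le_abs_jumpRamp_sub hu huv
    rwa [ha, mul_one, one_mul] at this
  have correlation_le : cubeE n (fun x => jumpRamp t A (lin n a x) * lin n a x) ≤
      6 * A * cubeE n (fun x => halfspace n a t x * lin n a x) := by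
    rw [← cubeE_const_mul]
    refine cubeE_mono fun x => ?_
    by_cases hx : t < lin n a x
    · have := mul_le_mul_of_nonneg_right (jumpRamp_le (t := t) hA (lin n a x)) (ht.trans hx.le)
      simpa [halfspace, hx] using this
    · simp [halfspace, jumpRamp, hx]
  rw [← cubeE_halfspace] at hp ⊢
  have level_one := cubeE_mul_lin_le (halfspace_nonneg a t) (halfspace_le_one a t) ha.le hp
    ((cubeE_halfspace_le_half ht).trans_lt (by norm_num))
  linarith [mul_le_mul_of_nonneg_left level_one (show 0 ≤ 6 * A by linarith)]

lemma infl_halfspace_le {A : ℝ} (ht : 0 ≤ t) (ha0 : ∀ i, 0 ≤ a i) (haA : ∀ i, a i ≤ A)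
    (ha : ∑ i, a i ^ 2 = 1) (hp : 0 < cubePr n (t < lin n a ·)) (i : Fin n) :
    infl n i (halfspace n a t) ≤ 18 * cubePr n (t < lin n a ·) *
      min 1 (A * √(Real.log (1 / cubePr n (t < lin n a ·)))) := by
  rw [mul_min_of_nonneg _ _ (by positivity)]
  refine le_min ?_ ?_
  · linarith [infl_halfspace_le_two_mul (a := a) (t := t) i]
  · linarith [infl_halfspace_le_two_mul_Ioc (t := t) (ha0 i) (haA i),
      cubePr_lin_mem_Ioc_le ht ((ha0 i).trans (haA i)) ha0 haA ha hp]

/-! ### The lower bound -/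

lemma mul_cubePr_lt_lin_le_cubePr_Ioc {A R : ℝ} (ht : 0 ≤ t) (hA : 0 ≤ A) (ha0 : ∀ i, 0 ≤ a i)
    (haA : ∀ i, a i ≤ A) (ha : ∑ i, a i ^ 2 ≤ 1) (hR : t + A ≤ R) :
    A * R * cubePr n (R < lin n a ·) ≤ cubePr n (lin n a · ∈ Set.Ioc (t - A) (t + A)) := by
  have hle : t - A ≤ t + A := by linarith
  set g : ℝ → ℝ := fun u => Set.projIcc (t - A) (t + A) hle u
  have g_mono : Monotone g := fun _ _ huv => Set.monotone_projIcc hle huv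
  have g_left {u : ℝ} (hu : u ≤ t - A) : g u = t - A := by
    simp only [g, Set.projIcc_of_le_left hle hu]
  have g_right {u : ℝ} (hu : t + A ≤ u) : g u = t + A := by
    simp only [g, Set.projIcc_of_right_le hle hu]
  have g_lipschitz : LipschitzWith 1 g := LipschitzWith.projIcc hle
  have g_const : ∀ u ∉ Set.Ioc (t - A) (t + A), ∀ v ∉ Set.Ioc (t - A) (t + A),
      |u - v| ≤ 2 * A → g u = g v := fun u hu v hv huv => by
    have := abs_le.mp huv
    rw [Set.mem_Ioc, not_and_or, not_lt, not_le] at hu hv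
    rcases hu with hu | hu <;> rcases hv with hv | hv
    · rw [g_left hu, g_left hv]
    · linarith
    · linarith
    · rw [g_right hu.le, g_right hv.le]
  have lower := mul_cubePr_le_cubeE_comp_lin_mul_lin (n := n) (a := a) (c := 2 * A) (R := R)
    g_mono (by linarith) fun u hu => by
      rw [g_right (by linarith), g_left (by linarith)]
      linarith
  have upper := cubeE_comp_lin_mul_lin_le g_mono ha0 haA g_lipschitz g_const
  rw [NNReal.coe_one, mul_one] at upper
  linarith [mul_le_mul_of_nonneg_right ha
    (cubePr_nonneg (n := n) (lin n a · ∈ Set.Ioc (t - A) (t + A)))]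

section Lower

variable {i : Fin n}

lemma mul_cubePr_le_infl_halfspace {R : ℝ} (ht : 0 ≤ t) (ha0 : ∀ j, 0 ≤ a j)
    (hmax : ∀ j, a j ≤ a i) (ha : ∑ j, a j ^ 2 = 1) (hR : t + a i ≤ R) :
    a i * R * cubePr n (R < lin n (Function.update a i 0) ·) ≤ infl n i (halfspace n a t) := by
  rw [infl_halfspace_eq (ha0 i)]
  have update_le (j : Fin n) : Function.update a i 0 j ≤ a j := by
    rcases eq_or_ne j i with rfl | hj <;> simp [*]
  have update_nonneg (j : Fin n) : 0 ≤ Function.update a i 0 j := by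
    rcases eq_or_ne j i with rfl | hj <;> simp [*]
  refine mul_cubePr_lt_lin_le_cubePr_Ioc ht (ha0 i) update_nonneg
    (fun j => (update_le j).trans (hmax j)) ?_ hR
  exact (sum_le_sum fun j _ => pow_le_pow_left₀ (update_nonneg j) (update_le j) 2).trans_eq ha

lemma half_mul_min_le_infl_halfspace (ht : 0 ≤ t) (ha0 : ∀ j, 0 ≤ a j) (hmax : ∀ j, a j ≤ a i)
    (ha : ∑ j, a j ^ 2 = 1) :
    cubePr n (t < lin n a ·) / 2 * min 1 (a i * (t + a i)) ≤ infl n i (halfspace n a t) := by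
  have main := mul_cubePr_le_infl_halfspace ht ha0 hmax ha le_rfl
  have union : cubePr n (t < lin n a ·) ≤
      cubePr n (t + a i < lin n (Function.update a i 0) ·) + infl n i (halfspace n a t) := by
    rw [infl_halfspace_eq (ha0 i)]
    refine cubePr_le_add fun x hx => ?_
    have := abs_le.mp (abs_lin_sub_lin_update_zero (ha0 i) x).le
    rw [Set.mem_Ioc]
    grind
  have := ha0 i
  have := cubePr_nonneg (n := n) (t < lin n a ·)
  rcases le_total (cubePr n (t < lin n a ·) / 2) (infl n i (halfspace n a t)) with h | h
  · exact (mul_le_of_le_one_right (by positivity) (min_le_left _ _)).trans h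
  · calc cubePr n (t < lin n a ·) / 2 * min 1 (a i * (t + a i))
        ≤ cubePr n (t + a i < lin n (Function.update a i 0) ·) * (a i * (t + a i)) := by
          exact mul_le_mul (by linarith) (min_le_right _ _) (by positivity) (cubePr_nonneg _)
      _ ≤ infl n i (halfspace n a t) := by rwa [mul_comm]

lemma mul_sqrt_log_one_div_le_one {p : ℝ} (hp : 0 < p) (hp1 : p ≤ 1) :
    p * √(Real.log (1 / p)) ≤ 1 := by
  have one_le : 1 ≤ 1 / p := (one_le_div hp).mpr hp1
  have : √(Real.log (1 / p)) ≤ 1 / p := by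
    refine Real.sqrt_le_iff.mpr ⟨by positivity, ?_⟩
    nlinarith [Real.log_le_sub_one_of_pos (show 0 < 1 / p by positivity)]
  rwa [le_div_iff₀' hp] at this

lemma sqrt_log_one_div_cubePr_le (ht : 1 ≤ t) (ha : ∑ j, a j ^ 2 = 1)
    (hat : ∀ j, |(4 * t + 2) * a j| ≤ 1) :
    √(Real.log (1 / cubePr n (t < lin n a ·))) ≤ 8 * t := by
  refine Real.sqrt_le_iff.mpr ⟨by linarith, ?_⟩
  have log_tail := Real.log_le_log (by positivity) (exp_le_cubePr_lt_lin (by linarith) ha hat)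
  rw [Real.log_mul (by norm_num) (Real.exp_ne_zero _), Real.log_exp] at log_tail
  have log_quarter : -3 ≤ Real.log (1 / 4) := by
    have := Real.one_sub_inv_le_log_of_pos (show (0 : ℝ) < 1 / 4 by norm_num)
    norm_num at this ⊢
    linarith
  rw [one_div, Real.log_inv]
  nlinarith

lemma le_infl_halfspace_of_one_le (ht : 1 ≤ t) (ha0 : ∀ j, 0 ≤ a j) (hmax : ∀ j, a j ≤ a i)
    (ha : ∑ j, a j ^ 2 = 1) :
    cubePr n (t < lin n a ·) / 16 *
        min 1 (a i * √(Real.log (1 / cubePr n (t < lin n a ·)))) ≤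
      infl n i (halfspace n a t) := by
  have hi := ha0 i
  have := cubePr_nonneg (n := n) (t < lin n a ·)
  refine le_trans ?_ (half_mul_min_le_infl_halfspace (zero_le_one.trans ht) ha0 hmax ha)
  suffices h : min 1 (a i * √(Real.log (1 / cubePr n (t < lin n a ·)))) / 8 ≤
      min 1 (a i * (t + a i)) by
    linarith [mul_le_mul_of_nonneg_left h (show 0 ≤ cubePr n (t < lin n a ·) / 2 by positivity)]
  have min_le_one := min_le_left 1 (a i * √(Real.log (1 / cubePr n (t < lin n a ·))))
  refine le_min (by linarith) ?_
  rcases le_total ((4 * t + 2) * a i) 1 with hsmall | hlarge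
  · have sqrt_le := sqrt_log_one_div_cubePr_le ht ha fun j => by
      rw [abs_of_nonneg (mul_nonneg (by linarith) (ha0 j))]
      exact (mul_le_mul_of_nonneg_left (hmax j) (by linarith)).trans hsmall
    have := min_le_right 1 (a i * √(Real.log (1 / cubePr n (t < lin n a ·))))
    nlinarith [mul_le_mul_of_nonneg_left sqrt_le hi]
  · nlinarith

lemma le_infl_halfspace_of_le_one (ht : 0 ≤ t) (ht1 : t ≤ 1) (ha0 : ∀ j, 0 ≤ a j)
    (hmax : ∀ j, a j ≤ a i) (ha : ∑ j, a j ^ 2 = 1) (hp : 0 < cubePr n (t < lin n a ·)) :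
    Real.exp (-294) / 392 * cubePr n (t < lin n a ·) *
        min 1 (a i * √(Real.log (1 / cubePr n (t < lin n a ·)))) ≤
      infl n i (halfspace n a t) := by
  have hi := ha0 i
  set p := cubePr n (t < lin n a ·)
  set L := √(Real.log (1 / p))
  rcases le_total (14 * a i) 1 with hsmall | hlarge
  · have tail : 1 / 4 * Real.exp (-294) ≤ cubePr n (2 < lin n (Function.update a i 0) ·) := by
      have tail_three := exp_le_cubePr_lt_lin (t := 3) (by norm_num) ha fun j => by
        rw [abs_of_nonneg (mul_nonneg (by norm_num) (ha0 j))]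
        linarith [hmax j]
      norm_num only at tail_three
      refine tail_three.trans (cubePr_mono fun x hx => ?_)
      linarith [abs_le.mp (abs_lin_sub_lin_update_zero hi x).le]
    calc Real.exp (-294) / 392 * p * min 1 (a i * L)
        ≤ Real.exp (-294) / 392 * p * (a i * L) := by gcongr; exact min_le_right _ _
      _ = Real.exp (-294) / 392 * a i * (p * L) := by ring
      _ ≤ Real.exp (-294) / 392 * a i * 1 := by
          gcongr
          exact mul_sqrt_log_one_div_le_one hp (cubePr_le_one _)
      _ ≤ a i * 2 * (1 / 4 * Real.exp (-294)) := by
          linarith [mul_nonneg (Real.exp_pos (-294)).le hi]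
      _ ≤ a i * 2 * cubePr n (2 < lin n (Function.update a i 0) ·) := by gcongr
      _ ≤ infl n i (halfspace n a t) :=
          mul_cubePr_le_infl_halfspace ht ha0 hmax ha (by linarith)
  · calc Real.exp (-294) / 392 * p * min 1 (a i * L)
        ≤ 1 / 392 * p * 1 := by
          gcongr
          · exact Real.exp_le_one_iff.mpr (by norm_num)
          · exact min_le_left _ _
      _ = p / 2 * (1 / 196) := by ring
      _ ≤ p / 2 * min 1 (a i * (t + a i)) := by
          gcongr
          exact le_min (by norm_num) (by nlinarith)
      _ ≤ infl n i (halfspace n a t) := half_mul_min_le_infl_halfspace ht ha0 hmax ha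

lemma le_infl_halfspace (ht : 0 ≤ t) (ha0 : ∀ j, 0 ≤ a j) (hmax : ∀ j, a j ≤ a i)
    (ha : ∑ j, a j ^ 2 = 1) (hp : 0 < cubePr n (t < lin n a ·)) :
    Real.exp (-294) / 392 * cubePr n (t < lin n a ·) *
        min 1 (a i * √(Real.log (1 / cubePr n (t < lin n a ·)))) ≤
      infl n i (halfspace n a t) := by
  rcases le_total t 1 with ht1 | ht1
  · exact le_infl_halfspace_of_le_one ht ht1 ha0 hmax ha hp
  refine le_trans ?_ (le_infl_halfspace_of_one_le ht1 ha0 hmax ha)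
  have hc : Real.exp (-294) ≤ 1 := Real.exp_le_one_iff.mpr (by norm_num)
  have := ha0 i
  gcongr
  linarith [mul_le_mul_of_nonneg_right hc hp.le]

end Lower

end Cube

/-- **The maximal influence of a halfspace.** There are universal constants
`c₁, c₂ > 0` such that for any halfspace `f = 1{∑ aᵢxᵢ > t}` with `∑ aᵢ² = 1`,
`a₁ ≥ ... ≥ aₙ ≥ 0` and `0 < E[f] ≤ 1/2`:
`c₁·E[f]·min(1, a₁√(log(1/E[f]))) ≤ maxᵢ Iᵢ(f) ≤ c₂·E[f]·min(1, a₁√(log(1/E[f])))`. -/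
theorem max_influence_halfspace :
    ∃ c₁ c₂ : ℝ, 0 < c₁ ∧ 0 < c₂ ∧
      ∀ (n : ℕ) (hn : 0 < n) (a : Fin n → ℝ) (t : ℝ),
        (∀ i, 0 ≤ a i) → (∀ i j : Fin n, i ≤ j → a j ≤ a i) →
        (∑ i, (a i) ^ 2) = 1 →
        0 < cubeE n (halfspace n a t) → cubeE n (halfspace n a t) ≤ 1 / 2 →
        c₁ * cubeE n (halfspace n a t) *
            min 1 (a ⟨0, hn⟩ * Real.sqrt (Real.log (1 / cubeE n (halfspace n a t)))) ≤
          (univ.sup' ⟨⟨0, hn⟩, mem_univ _⟩ fun i => infl n i (halfspace n a t)) ∧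
        (univ.sup' ⟨⟨0, hn⟩, mem_univ _⟩ fun i => infl n i (halfspace n a t)) ≤
          c₂ * cubeE n (halfspace n a t) *
            min 1 (a ⟨0, hn⟩ * Real.sqrt (Real.log (1 / cubeE n (halfspace n a t)))) := by
  refine ⟨Real.exp (-294) / 392, 18, by positivity, by norm_num,
    fun n hn a t ha0 hanti ha hp hp_half => ?_⟩
  obtain ⟨s, hs, hts⟩ := exists_nonneg_halfspace_eq hp_half
  rw [hts, cubeE_halfspace] at hp ⊢
  have hmax (i : Fin n) : a i ≤ a ⟨0, hn⟩ := hanti _ _ (Fin.mk_le_of_le_val (Nat.zero_le _))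
  exact ⟨(le_infl_halfspace hs ha0 hmax ha hp).trans
      (le_sup' (fun i => infl n i (halfspace n a s)) (mem_univ _)),
    sup'_le _ _ fun i _ => infl_halfspace_le hs ha0 hmax ha hp i⟩

end
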